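/- Let d ≥ 1 be an integer, α ∈ (−1,1), and define b : ℝ^d → ℝ^d by b(x) = |x|^{α−1} x for 0 < |x| ≤ 1, b(x) = x for |x| > 1, and b(0) = 0. Then for every x₀ ∈ ℝ^d with x₀ ≠ 0 there exists exactly one continuous function y : [0,∞) → ℝ^d such that s ↦ b(y(s)) is locally Lebesgue integrable and y(t) = x₀ + ∫₀^t b(y(s)) ds for all t ≥ 0. -/

import Mathlib

open MeasureTheory Set
open scoped ENNReal

noncomputable section

/-- The outward-pointing drift `b(x) = |x|^{α-1} x` for `0 < |x| ≤ 1`,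
`b(x) = x` for `|x| > 1`, and `b(0) = 0` (note `‖x‖ ^ (α-1) = 0` at `x = 0`
for the real power with negative exponent). -/
def bOut (d : ℕ) (α : ℝ) (x : EuclideanSpace ℝ (Fin d)) : EuclideanSpace ℝ (Fin d) :=
  if ‖x‖ ≤ 1 then (‖x‖ ^ (α - 1)) • x else x

/-- `y` is a solution on `[0,∞)` of the ODE `y' = bOut d α (y)`, `y 0 = x₀`,
in the integral sense, with locally integrable right-hand side. -/
def IsSolOut (d : ℕ) (α : ℝ) (x₀ : EuclideanSpace ℝ (Fin d))
    (y : ℝ → EuclideanSpace ℝ (Fin d)) : Prop :=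
  ContinuousOn y (Ici 0) ∧
  (∀ t : ℝ, 0 ≤ t → IntegrableOn (fun s => bOut d α (y s)) (Icc 0 t)) ∧
  (∀ t : ℝ, 0 ≤ t → y t = x₀ + ∫ s in (0 : ℝ)..t, bOut d α (y s))

section

variable {d : ℕ} {α : ℝ}

theorem bOut_eq_min_rpow_smul (x : EuclideanSpace ℝ (Fin d)) :
    bOut d α x = (min ‖x‖ 1 ^ (α - 1)) • x := by
  unfold bOut
  split_ifs with h
  · rw [min_eq_left h]
  · rw [min_eq_right (not_le.mp h).le, Real.one_rpow, one_smul]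

theorem continuousAt_bOut {x : EuclideanSpace ℝ (Fin d)} (hx : x ≠ 0) :
    ContinuousAt (bOut d α) x := by
  rw [funext (bOut_eq_min_rpow_smul (d := d) (α := α))]
  have hpos : 0 < min ‖x‖ 1 := lt_min (norm_pos_iff.mpr hx) one_pos
  exact ((continuous_norm.min continuous_const).continuousAt.rpow_const
    (Or.inl hpos.ne')).smul continuousAt_id

theorem abs_rpow_sub_rpow_le {p m u v : ℝ} (hp : p ≤ 1) (hm : 0 < m) (hu : m ≤ u) (hv : m ≤ v) :
    |u ^ p - v ^ p| ≤ |p| * m ^ (p - 1) * |u - v| := by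
  refine Convex.norm_image_sub_le_of_norm_hasDerivWithin_le (s := Ici m)
    (f := fun w : ℝ => w ^ p) (f' := fun w => p * w ^ (p - 1)) (fun w hw => ?_) (fun w hw => ?_)
    (convex_Ici m) hv hu
  · exact (Real.hasDerivAt_rpow_const (Or.inl (hm.trans_le hw).ne')).hasDerivWithinAt
  · have hw0 : 0 < w := hm.trans_le hw
    rw [Real.norm_eq_abs, abs_mul, abs_of_nonneg (Real.rpow_nonneg hw0.le _)]
    gcongr 1
    exact Real.rpow_le_rpow_of_nonpos hm hw (by linarith)

theorem exists_lipschitzOnWith_bOut (hα : α ≤ 1) {r : ℝ} (hr : 0 < r) :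
    ∃ K, LipschitzOnWith K (bOut d α) {x | r ≤ ‖x‖} := by
  set m := min r 1
  have hm : 0 < m := lt_min hr one_pos
  set C := |α - 1| * m ^ (α - 1 - 1)
  have hC : 0 ≤ C := by positivity
  have hK : 0 ≤ m ^ (α - 1) + C := by positivity
  have key : ∀ x y : EuclideanSpace ℝ (Fin d), r ≤ ‖x‖ → ‖x‖ ≤ ‖y‖ →
      dist (bOut d α x) (bOut d α y) ≤ (m ^ (α - 1) + C) * dist x y := by
    intro x y hx hxy
    have hmx : m ≤ min ‖x‖ 1 := min_le_min_right 1 hx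
    have hmy : m ≤ min ‖y‖ 1 := min_le_min_right 1 (hx.trans hxy)
    have hbound : min ‖y‖ 1 ^ (α - 1) ≤ m ^ (α - 1) :=
      Real.rpow_le_rpow_of_nonpos hm hmy (by linarith)
    have hnonneg : 0 ≤ min ‖y‖ 1 ^ (α - 1) := Real.rpow_nonneg (hm.le.trans hmy) _
    have hcoef : |min ‖x‖ 1 ^ (α - 1) - min ‖y‖ 1 ^ (α - 1)| * ‖x‖ ≤ C * ‖x - y‖ := by
      rcases le_total ‖x‖ 1 with h1 | h1
      · have hdiff : |min ‖x‖ 1 - min ‖y‖ 1| ≤ ‖x - y‖ :=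
          (abs_min_sub_min_le_max _ _ _ _).trans (by simpa using abs_norm_sub_norm_le x y)
        calc _ ≤ |min ‖x‖ 1 ^ (α - 1) - min ‖y‖ 1 ^ (α - 1)| * 1 := by gcongr
          _ ≤ C * |min ‖x‖ 1 - min ‖y‖ 1| := by
            rw [mul_one]
            exact abs_rpow_sub_rpow_le (by linarith) hm hmx hmy
          _ ≤ C * ‖x - y‖ := by gcongr
      · rw [min_eq_right h1, min_eq_right (h1.trans hxy), sub_self, abs_zero, zero_mul]
        positivity
    rw [dist_eq_norm, dist_eq_norm, bOut_eq_min_rpow_smul, bOut_eq_min_rpow_smul]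
    calc _ = ‖(min ‖y‖ 1 ^ (α - 1)) • (x - y)
          + (min ‖x‖ 1 ^ (α - 1) - min ‖y‖ 1 ^ (α - 1)) • x‖ := by
          congr 1
          module
      _ ≤ min ‖y‖ 1 ^ (α - 1) * ‖x - y‖
          + |min ‖x‖ 1 ^ (α - 1) - min ‖y‖ 1 ^ (α - 1)| * ‖x‖ := by
          refine (norm_add_le _ _).trans_eq ?_
          rw [norm_smul, norm_smul, Real.norm_eq_abs, Real.norm_eq_abs, abs_of_nonneg hnonneg]
      _ ≤ m ^ (α - 1) * ‖x - y‖ + C * ‖x - y‖ := by gcongr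
      _ = _ := by ring
  refine ⟨⟨_, hK⟩, LipschitzOnWith.of_dist_le_mul fun x hx y hy => ?_⟩
  rcases le_total ‖x‖ ‖y‖ with h | h
  · exact key x y hx h
  · rw [dist_comm, dist_comm x y]
    exact key y x hy h

namespace IsSolOut

variable {x₀ : EuclideanSpace ℝ (Fin d)} {y : ℝ → EuclideanSpace ℝ (Fin d)}

theorem apply_zero (hy : IsSolOut d α x₀ y) : y 0 = x₀ := by
  simpa using hy.2.2 0 le_rfl

theorem hasDerivWithinAt (hy : IsSolOut d α x₀ y) {t : ℝ} (ht : 0 ≤ t) (hyt : y t ≠ 0) :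
    HasDerivWithinAt y (bOut d α (y t)) (Ici t) t := by
  obtain ⟨hcont, hint, heq⟩ := hy
  have hsub : Ioi t ⊆ Ici (0 : ℝ) := fun s hs => ht.trans (le_of_lt hs)
  have hmeas : StronglyMeasurableAtFilter (fun s => bOut d α (y s)) (nhdsWithin t (Ioi t)) := by
    refine ⟨Icc 0 (t + 1), ?_, (hint (t + 1) (by linarith)).aestronglyMeasurable⟩
    filter_upwards [Ioo_mem_nhdsGT (show t < t + 1 by linarith)] with s hs
    exact ⟨ht.trans hs.1.le, hs.2.le⟩
  have hcontb : ContinuousWithinAt (fun s => bOut d α (y s)) (Ioi t) t :=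
    (continuousAt_bOut hyt).comp_continuousWithinAt ((hcont t ht).mono hsub)
  have hii : IntervalIntegrable (fun s => bOut d α (y s)) volume 0 t :=
    (intervalIntegrable_iff_integrableOn_Icc_of_le ht).mpr (hint t ht)
  have hderiv := (intervalIntegral.integral_hasDerivWithinAt_right hii (s := Ici t)
    hmeas hcontb).const_add x₀
  exact hderiv.congr (fun s hs => heq s (ht.trans hs)) (heq t ht)

theorem norm_le_norm (hy : IsSolOut d α x₀ y) (hx₀ : x₀ ≠ 0) {t : ℝ} (ht : 0 ≤ t) :
    ‖x₀‖ ≤ ‖y t‖ := by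
  have hcont : ContinuousOn y (Icc 0 t) := hy.1.mono Icc_subset_Ici_self
  have hle := image_le_of_liminf_slope_right_lt_deriv_boundary' (a := 0) (b := t)
    (f := fun s => -‖y s‖ ^ 2) (f' := fun s => -(2 * inner ℝ (y s) (bOut d α (y s))))
    (B := fun _ => -‖x₀‖ ^ 2) (B' := fun _ => 0) (hcont.norm.pow 2).neg ?_
    (by rw [hy.apply_zero]) continuousOn_const (fun s _ => hasDerivWithinAt_const _ _ _) ?_
    (right_mem_Icc.mpr ht)
  · exact le_of_sq_le_sq (neg_le_neg_iff.mp hle) (norm_nonneg _)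
  · intro s hs c hc
    by_cases hys : y s = 0
    · refine Filter.Eventually.frequently ?_
      filter_upwards [self_mem_nhdsWithin] with z hz
      have hc0 : 0 < c := by simpa [hys] using hc
      refine lt_of_le_of_lt ?_ hc0
      rw [slope_def_field]
      refine div_nonpos_of_nonpos_of_nonneg ?_ (sub_nonneg.mpr (le_of_lt hz))
      simp [hys]
    · exact (hy.hasDerivWithinAt hs.1 hys).norm_sq.neg.liminf_right_slope_le hc
  · intro s _ hs
    have hnorm : 0 < ‖y s‖ := by
      have hx : 0 < ‖x₀‖ ^ 2 := by positivity
      have hsq : 0 < ‖y s‖ ^ 2 := by linarith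
      exact (norm_nonneg _).lt_of_ne' (pow_ne_zero_iff two_ne_zero |>.mp hsq.ne')
    have hmin : 0 < min ‖y s‖ 1 := lt_min hnorm one_pos
    rw [bOut_eq_min_rpow_smul, inner_smul_right, real_inner_self_eq_norm_sq]
    exact neg_neg_of_pos (by positivity)

theorem eqOn {y' : ℝ → EuclideanSpace ℝ (Fin d)} (hα : α ≤ 1) (hx₀ : x₀ ≠ 0)
    (hy : IsSolOut d α x₀ y) (hy' : IsSolOut d α x₀ y') : EqOn y y' (Ici 0) := by
  intro t ht
  have hr : 0 < ‖x₀‖ := norm_pos_iff.mpr hx₀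
  obtain ⟨K, hK⟩ := exists_lipschitzOnWith_bOut (d := d) hα hr
  have hderiv : ∀ z, IsSolOut d α x₀ z → ∀ s ∈ Ico 0 t,
      HasDerivWithinAt z (bOut d α (z s)) (Ici s) s := fun z hz s hs =>
    hz.hasDerivWithinAt hs.1 (norm_pos_iff.mp (hr.trans_le (hz.norm_le_norm hx₀ hs.1)))
  exact ODE_solution_unique_of_mem_Icc_right (v := fun _ => bOut d α)
    (s := fun _ => {x | ‖x₀‖ ≤ ‖x‖}) (fun _ _ => hK)
    (hy.1.mono Icc_subset_Ici_self) (hderiv y hy) (fun s hs => hy.norm_le_norm hx₀ hs.1)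
    (hy'.1.mono Icc_subset_Ici_self) (hderiv y' hy') (fun s hs => hy'.norm_le_norm hx₀ hs.1)
    (hy.apply_zero.trans hy'.apply_zero.symm) (right_mem_Icc.mpr ht)

/-- A positive solution of the radial equation yields a solution along a fixed direction. -/
theorem of_radial {e : EuclideanSpace ℝ (Fin d)} (he : ‖e‖ = 1) {ρ : ℝ → ℝ}
    (hcont : ContinuousOn ρ (Ici 0)) (hpos : ∀ t, 0 ≤ t → 0 < ρ t)
    (hderiv : ∀ t, 0 ≤ t → HasDerivWithinAt ρ (min (ρ t) 1 ^ (α - 1) * ρ t) (Ioi t) t) :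
    IsSolOut d α (ρ 0 • e) (fun t => ρ t • e) := by
  have hnorm : ∀ t, 0 ≤ t → ‖ρ t • e‖ = ρ t := fun t ht => by
    rw [norm_smul, he, mul_one, Real.norm_of_nonneg (hpos t ht).le]
  have hcy : ContinuousOn (fun t => ρ t • e) (Ici 0) := hcont.smul continuousOn_const
  have hcb : ContinuousOn (fun t => bOut d α (ρ t • e)) (Ici 0) := fun t ht =>
    ContinuousAt.comp_continuousWithinAt (f := fun t => ρ t • e)
      (continuousAt_bOut (norm_pos_iff.mp ((hpos t ht).trans_eq (hnorm t ht).symm))) (hcy t ht)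
  have hint : ∀ t : ℝ, 0 ≤ t → IntegrableOn (fun s => bOut d α (ρ s • e)) (Icc 0 t) :=
    fun t _ => (hcb.mono Icc_subset_Ici_self).integrableOn_Icc
  refine ⟨hcy, hint, fun t ht => ?_⟩
  rw [intervalIntegral.integral_eq_sub_of_hasDeriv_right (f := fun s => ρ s • e)]
  · simp
  · rw [uIcc_of_le ht]
    exact hcy.mono Icc_subset_Ici_self
  · intro s hs
    rw [min_eq_left ht] at hs
    rw [bOut_eq_min_rpow_smul, hnorm s hs.1.le, smul_smul]
    exact (hderiv s hs.1.le).smul_const e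
  · exact (intervalIntegrable_iff_integrableOn_Icc_of_le ht).mpr (hint t ht)

end IsSolOut

/-- The positive solution of the radial equation that passes through `1` at time `0`. -/
def radialProfile (α u : ℝ) : ℝ :=
  if u ≤ 0 then (1 + (1 - α) * u) ^ (1 - α)⁻¹ else Real.exp u

theorem radialProfile_of_nonneg {u : ℝ} (hu : 0 ≤ u) : radialProfile α u = Real.exp u := by
  rcases hu.eq_or_lt with rfl | hu
  · simp [radialProfile]
  · rw [radialProfile, if_neg hu.not_ge]

theorem continuous_radialProfile (hα : α < 1) : Continuous (radialProfile α) := by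
  refine Continuous.if_le ?_ Real.continuous_exp continuous_id continuous_const ?_
  · exact (by fun_prop : Continuous fun u : ℝ => 1 + (1 - α) * u).rpow_const
      fun _ => Or.inr (inv_nonneg.mpr (by linarith))
  · rintro u rfl
    simp

theorem radialProfile_pos {u : ℝ} (hu : 0 < 1 + (1 - α) * u) : 0 < radialProfile α u := by
  unfold radialProfile
  split_ifs
  · positivity
  · positivity

theorem hasDerivWithinAt_radialProfile (hα : α < 1) {u : ℝ} (hu : 0 < 1 + (1 - α) * u) :
    HasDerivWithinAt (radialProfile α)
      (min (radialProfile α u) 1 ^ (α - 1) * radialProfile α u) (Ioi u) u := by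
  have hβ : 0 < 1 - α := by linarith
  rcases lt_or_ge u 0 with h | h
  · have hval : radialProfile α u = (1 + (1 - α) * u) ^ (1 - α)⁻¹ := if_pos h.le
    have hle : radialProfile α u ≤ 1 := by
      rw [hval]
      exact Real.rpow_le_one hu.le (by nlinarith) (inv_nonneg.mpr hβ.le)
    have hbase : HasDerivAt (fun v : ℝ => 1 + (1 - α) * v) (1 - α) u := by
      simpa using ((hasDerivAt_id u).const_mul (1 - α)).const_add 1
    have hpow := hbase.rpow_const (p := (1 - α)⁻¹) (Or.inl hu.ne')
    have heq : radialProfile α =ᶠ[nhds u] fun v => (1 + (1 - α) * v) ^ (1 - α)⁻¹ := by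
      filter_upwards [Iio_mem_nhds h] with v hv
      exact if_pos (le_of_lt hv)
    refine ((hpow.congr_of_eventuallyEq heq).congr_deriv ?_).hasDerivWithinAt
    rw [min_eq_left hle, hval, mul_inv_cancel₀ hβ.ne', one_mul, ← Real.rpow_mul hu.le,
      ← Real.rpow_add hu]
    congr 1
    field_simp
    ring
  · have h1 : 1 ≤ radialProfile α u := by
      rw [radialProfile_of_nonneg h]
      exact Real.one_le_exp h
    rw [min_eq_right h1, Real.one_rpow, one_mul, radialProfile_of_nonneg h]
    exact (Real.hasDerivAt_exp u).hasDerivWithinAt.congr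
      (fun v hv => radialProfile_of_nonneg (h.trans (le_of_lt hv))) (radialProfile_of_nonneg h)

theorem exists_radialProfile_eq (hα : α < 1) {r : ℝ} (hr : 0 < r) :
    ∃ u, 0 < 1 + (1 - α) * u ∧ radialProfile α u = r := by
  have hβ : 0 < 1 - α := by linarith
  rcases le_total 1 r with h | h
  · have hlog : 0 ≤ Real.log r := Real.log_nonneg h
    exact ⟨Real.log r, by positivity, by rw [radialProfile_of_nonneg hlog, Real.exp_log hr]⟩
  · have hbase : 1 + (1 - α) * ((r ^ (1 - α) - 1) / (1 - α)) = r ^ (1 - α) := by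
      field_simp
      ring
    have hneg : (r ^ (1 - α) - 1) / (1 - α) ≤ 0 :=
      div_nonpos_of_nonpos_of_nonneg (by linarith [Real.rpow_le_one hr.le h hβ.le]) hβ.le
    refine ⟨(r ^ (1 - α) - 1) / (1 - α), by rw [hbase]; positivity, ?_⟩
    rw [radialProfile, if_pos hneg, hbase, Real.rpow_rpow_inv hr.le hβ.ne']

theorem exists_isSolOut (hα : α < 1) {x₀ : EuclideanSpace ℝ (Fin d)} (hx₀ : x₀ ≠ 0) :
    ∃ y, IsSolOut d α x₀ y := by
  have hr : 0 < ‖x₀‖ := norm_pos_iff.mpr hx₀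
  obtain ⟨u, hu, hur⟩ := exists_radialProfile_eq hα hr
  have hpos : ∀ t : ℝ, 0 ≤ t → 0 < 1 + (1 - α) * (t + u) := fun t ht => by nlinarith
  have he : ‖‖x₀‖⁻¹ • x₀‖ = 1 := by
    rw [norm_smul, norm_inv, norm_norm, inv_mul_cancel₀ hr.ne']
  have hsol := IsSolOut.of_radial (α := α) he (ρ := fun t => radialProfile α (t + u))
    ((continuous_radialProfile hα).comp (continuous_add_const u)).continuousOn
    (fun t ht => radialProfile_pos (hpos t ht))
    (fun t ht => ?_)
  · rw [zero_add, hur, smul_inv_smul₀ hr.ne'] at hsol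
    exact ⟨_, hsol⟩
  · have hmaps : MapsTo (fun s => s + u) (Ioi t) (Ioi (t + u)) :=
      fun s hs => (add_lt_add_iff_right u).mpr hs
    have h := (hasDerivWithinAt_radialProfile hα (hpos t ht)).scomp t
      ((hasDerivAt_id t).add_const u).hasDerivWithinAt hmaps
    rwa [one_smul] at h

end

theorem outward_drift_uniqueness_away_from_origin (d : ℕ) (hd : 1 ≤ d)
    (α : ℝ) (hα : α ∈ Ioo (-1 : ℝ) 1)
    (x₀ : EuclideanSpace ℝ (Fin d)) (hx₀ : x₀ ≠ 0) :
    (∃ y, IsSolOut d α x₀ y) ∧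
    (∀ y₁ y₂, IsSolOut d α x₀ y₁ → IsSolOut d α x₀ y₂ → EqOn y₁ y₂ (Ici 0)) := by
  exact ⟨exists_isSolOut hα.2 hx₀, fun y₁ y₂ h₁ h₂ => h₁.eqOn hα.2.le hx₀ h₂⟩

end
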